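/- Let L be a finite-dimensional Leibniz algebra over a field of characteristic zero such that every maximal nilpotent subalgebra of L is a weak c-ideal of L. Then L is solvable. -/

import Mathlib

/-!
The argument works with the solvable residual `D`, the stable term of the derived series of `L`, so
that `[D, D] = D`. Solvability of `L` means `D = 0`, and for this it is enough that every `x ∈ D`
lies in some fixed solvable ideal `R`, chosen maximal (it contains all solvable ideals).

* If `L = U + C` with `U` nilpotent and `C` a subideal, then `D ≤ C`
  (`le_of_weak_complement`): going down the chain, if `D` lies in one term then it lies in the next,
  since the quotient of the two terms is a quotient of a subalgebra of `U` and `D` is perfect.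
  Hence, for `U` a maximal nilpotent subalgebra, `D ∩ U` lies in the core of `U`, a nilpotent ideal.
* A single element of a Leibniz algebra need not generate a nilpotent subalgebra. But by a
  Fitting argument on the right annihilator `Z` (an abelian ideal containing all squares), each
  `x ∈ D` can be changed by an element of `Z ∩ D` so that the result lies in a nilpotent subalgebra
  (`exists_nilpotent_correction`).

So every `x ∈ D` is a sum of an element of the core of a maximal nilpotent subalgebra and an element
of `Z`, both of which are solvable ideals. No Levi decomposition is needed.
-/

open Submodule

variable {F : Type*} [Field F] {L : Type*} [AddCommGroup L] [Module F L]

/-- `br` is a (right) Leibniz bracket: the right multiplications are derivations. -/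
def IsLeibnizBracket (br : L →ₗ[F] L →ₗ[F] L) : Prop :=
  ∀ x y z : L, br x (br y z) = br (br x y) z - br (br x z) y

/-- A symmetric Leibniz bracket: right and left Leibniz, and `[[x,y],[x,y]] = 0`. -/
def IsSymmetricLeibnizBracket (br : L →ₗ[F] L →ₗ[F] L) : Prop :=
  IsLeibnizBracket br ∧
  (∀ x y z : L, br x (br y z) = br (br x y) z + br y (br x z)) ∧
  (∀ x y : L, br (br x y) (br x y) = 0)

/-- `B` is a subalgebra (a submodule closed under the bracket). -/
def IsSubalg (br : L →ₗ[F] L →ₗ[F] L) (B : Submodule F L) : Prop :=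
  ∀ x ∈ B, ∀ y ∈ B, br x y ∈ B

/-- `A` is an ideal of the subalgebra `B`. -/
def IsIdealOf (br : L →ₗ[F] L →ₗ[F] L) (A B : Submodule F L) : Prop :=
  A ≤ B ∧ ∀ x ∈ A, ∀ y ∈ B, br x y ∈ A ∧ br y x ∈ A

/-- `A` is an ideal of `L`. -/
def IsLeibIdeal (br : L →ₗ[F] L →ₗ[F] L) (A : Submodule F L) : Prop :=
  IsIdealOf br A ⊤

/-- `C` is a subideal of the subalgebra `K`: there is a chain
`C = C_0 ⊆ C_1 ⊆ ... ⊆ C_n = K` with each term an ideal of the next. -/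
def IsSubidealOf (br : L →ₗ[F] L →ₗ[F] L) (C K : Submodule F L) : Prop :=
  ∃ (n : ℕ) (ch : ℕ → Submodule F L), ch 0 = C ∧ ch n = K ∧
    ∀ i < n, IsIdealOf br (ch i) (ch (i + 1))

/-- `C` is a subideal of `L`. -/
def IsSubideal (br : L →ₗ[F] L →ₗ[F] L) (C : Submodule F L) : Prop :=
  IsSubidealOf br C ⊤

/-- The core of `B` in the subalgebra `K`: the largest ideal of `K` contained in `B`. -/
def leibCoreIn (br : L →ₗ[F] L →ₗ[F] L) (K B : Submodule F L) : Submodule F L :=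
  sSup {A | IsIdealOf br A K ∧ A ≤ B}

/-- `B_L`, the largest ideal of `L` contained in `B`. -/
def leibCore (br : L →ₗ[F] L →ₗ[F] L) (B : Submodule F L) : Submodule F L :=
  leibCoreIn br ⊤ B

/-- `B` is a c-ideal of `L`. -/
def IsCIdeal (br : L →ₗ[F] L →ₗ[F] L) (B : Submodule F L) : Prop :=
  IsSubalg br B ∧ ∃ K, IsLeibIdeal br K ∧ B ⊔ K = ⊤ ∧ B ⊓ K ≤ leibCore br B

/-- `B` is a weak c-ideal of the subalgebra `K`. -/
def IsWeakCIdealOf (br : L →ₗ[F] L →ₗ[F] L) (B K : Submodule F L) : Prop :=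
  IsSubalg br B ∧ B ≤ K ∧
    ∃ C, IsSubidealOf br C K ∧ B ⊔ C = K ∧ B ⊓ C ≤ leibCoreIn br K B

/-- `B` is a weak c-ideal of `L`. -/
def IsWeakCIdeal (br : L →ₗ[F] L →ₗ[F] L) (B : Submodule F L) : Prop :=
  IsWeakCIdealOf br B ⊤

/-- The Leibniz kernel `I`, spanned by all squares. -/
def leibnizKernel (br : L →ₗ[F] L →ₗ[F] L) : Submodule F L :=
  Submodule.span F {y | ∃ x : L, y = br x x}

/-- The span of all brackets `[a,b]` with `a ∈ A`, `b ∈ B`. -/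
def brSpan (br : L →ₗ[F] L →ₗ[F] L) (A B : Submodule F L) : Submodule F L :=
  Submodule.span F {z | ∃ x ∈ A, ∃ y ∈ B, z = br x y}

/-- The derived series of the subalgebra `U`. -/
def derSeriesOf (br : L →ₗ[F] L →ₗ[F] L) (U : Submodule F L) : ℕ → Submodule F L
  | 0 => U
  | n + 1 => brSpan br (derSeriesOf br U n) (derSeriesOf br U n)

/-- The subalgebra `U` is solvable. -/
def IsSolvableSub (br : L →ₗ[F] L →ₗ[F] L) (U : Submodule F L) : Prop :=
  ∃ n, derSeriesOf br U n = ⊥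

/-- The lower central series of the subalgebra `U`. -/
def lcsOf (br : L →ₗ[F] L →ₗ[F] L) (U : Submodule F L) : ℕ → Submodule F L
  | 0 => U
  | n + 1 => brSpan br (lcsOf br U n) U

/-- The subalgebra `U` is nilpotent. -/
def IsNilpotentSub (br : L →ₗ[F] L →ₗ[F] L) (U : Submodule F L) : Prop :=
  ∃ n, lcsOf br U n = ⊥

/-- `M` is a maximal (proper) subalgebra of the subalgebra `U`. -/
def IsMaximalSubalgOf (br : L →ₗ[F] L →ₗ[F] L) (M U : Submodule F L) : Prop :=
  IsSubalg br M ∧ M < U ∧ ∀ K, IsSubalg br K → M ≤ K → K ≤ U → K = M ∨ K = U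

/-- `M` is a maximal subalgebra of `L`. -/
def IsMaximalSubalg (br : L →ₗ[F] L →ₗ[F] L) (M : Submodule F L) : Prop :=
  IsMaximalSubalgOf br M ⊤

/-- `U` is a maximal nilpotent subalgebra of `L`. -/
def IsMaximalNilpotentSub (br : L →ₗ[F] L →ₗ[F] L) (U : Submodule F L) : Prop :=
  IsSubalg br U ∧ IsNilpotentSub br U ∧
    ∀ V, IsSubalg br V → IsNilpotentSub br V → U ≤ V → V = U

/-- `H` is a Cartan subalgebra of the subalgebra `S`: a nilpotent subalgebra
that is self-normalizing in `S`. -/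
def IsCartanSubalgOf (br : L →ₗ[F] L →ₗ[F] L) (H S : Submodule F L) : Prop :=
  IsSubalg br H ∧ H ≤ S ∧ IsNilpotentSub br H ∧
    ∀ x ∈ S, (∀ c ∈ H, br x c ∈ H ∧ br c x ∈ H) → x ∈ H

/-- `H` is a Cartan subalgebra of `L`. -/
def IsCartanSubalg (br : L →ₗ[F] L →ₗ[F] L) (H : Submodule F L) : Prop :=
  IsCartanSubalgOf br H ⊤

/-- The Frattini subalgebra of the subalgebra `C`:
the intersection of the maximal subalgebras of `C`. -/
def frattiniIn (br : L →ₗ[F] L →ₗ[F] L) (C : Submodule F L) : Submodule F L :=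
  sInf {M | IsMaximalSubalgOf br M C}

/-- The Frattini subalgebra `F(L)`. -/
def frattiniSubalg (br : L →ₗ[F] L →ₗ[F] L) : Submodule F L :=
  frattiniIn br ⊤

/-- The Frattini ideal `φ(L)`. -/
def frattiniIdeal (br : L →ₗ[F] L →ₗ[F] L) : Submodule F L :=
  leibCore br (frattiniSubalg br)

/-- `L` is supersolvable: there is a chain of ideals of `L` from `0` to `L`
each of codimension one in the next. -/
def IsSupersolvable (br : L →ₗ[F] L →ₗ[F] L) : Prop :=
  ∃ (n : ℕ) (ch : ℕ → Submodule F L), ch 0 = ⊥ ∧ ch n = ⊤ ∧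
    (∀ i ≤ n, IsLeibIdeal br (ch i)) ∧
    ∀ i < n, ch i ≤ ch (i + 1) ∧
      Module.finrank F (ch (i + 1)) = Module.finrank F (ch i) + 1

/-- A subalgebra is abelian if all brackets of its elements vanish. -/
def IsAbelianSub (br : L →ₗ[F] L →ₗ[F] L) (A : Submodule F L) : Prop :=
  ∀ x ∈ A, ∀ y ∈ A, br x y = 0

/-- `A` is a minimal abelian ideal of `L`. -/
def IsMinimalAbelianIdeal (br : L →ₗ[F] L →ₗ[F] L) (A : Submodule F L) : Prop :=
  IsLeibIdeal br A ∧ A ≠ ⊥ ∧ IsAbelianSub br A ∧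
    ∀ A', IsLeibIdeal br A' → A' ≤ A → A' = ⊥ ∨ A' = A

/-- The abelian socle `Asoc(L)`: the sum of the minimal abelian ideals of `L`. -/
def abelianSocle (br : L →ₗ[F] L →ₗ[F] L) : Submodule F L :=
  sSup {A | IsMinimalAbelianIdeal br A}

theorem isLeibIdeal_sSup (br : L →ₗ[F] L →ₗ[F] L) (S : Set (Submodule F L))
    (h : ∀ A ∈ S, IsLeibIdeal br A) : IsLeibIdeal br (sSup S) := by
  refine ⟨le_top, fun x hx y _ => ?_⟩
  let P : Submodule F L :=
    { carrier := {a | br a y ∈ sSup S ∧ br y a ∈ sSup S}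
      zero_mem' := by simp
      add_mem' := by
        rintro a b ⟨ha1, ha2⟩ ⟨hb1, hb2⟩
        constructor
        · simpa [map_add, LinearMap.add_apply] using add_mem ha1 hb1
        · simpa [map_add] using add_mem ha2 hb2
      smul_mem' := by
        rintro c a ⟨ha1, ha2⟩
        constructor
        · simpa [map_smul, LinearMap.smul_apply] using smul_mem _ c ha1
        · simpa [map_smul] using smul_mem _ c ha2 }
  have hP : sSup S ≤ P := by
    refine sSup_le fun A hA a ha => ?_
    exact ⟨le_sSup hA ((h A hA).2 a ha y trivial).1,
           le_sSup hA ((h A hA).2 a ha y trivial).2⟩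
  exact hP hx

theorem leibCore_isIdeal (br : L →ₗ[F] L →ₗ[F] L) (B : Submodule F L) :
    IsLeibIdeal br (leibCore br B) :=
  isLeibIdeal_sSup br _ fun _ hA => hA.1

/-- The bracket induced on the quotient of `L` by an ideal `A`. -/
def quotBr (br : L →ₗ[F] L →ₗ[F] L) (A : Submodule F L) (hA : IsLeibIdeal br A) :
    (L ⧸ A) →ₗ[F] (L ⧸ A) →ₗ[F] (L ⧸ A) :=
  Submodule.liftQ A
    { toFun := fun x => Submodule.liftQ A (A.mkQ.comp (br x))
        (fun a ha => by
          simp only [LinearMap.mem_ker, LinearMap.comp_apply, Submodule.mkQ_apply,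
            Submodule.Quotient.mk_eq_zero]
          exact (hA.2 a ha x trivial).2)
      map_add' := fun x y => by
        apply Submodule.linearMap_qext
        ext z
        simp [map_add]
      map_smul' := fun c x => by
        apply Submodule.linearMap_qext
        ext z
        simp [map_smul] }
    (fun a ha => by
      simp only [LinearMap.mem_ker]
      apply Submodule.linearMap_qext
      ext z
      simp only [LinearMap.coe_mk, AddHom.coe_mk, LinearMap.comp_apply, Submodule.mkQ_apply,
        Submodule.liftQ_apply, LinearMap.zero_comp, LinearMap.zero_apply,
        Submodule.Quotient.mk_eq_zero]
      exact (hA.2 a ha z trivial).1)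

/-! ### Derived and lower central series -/

section Aux

variable {br : L →ₗ[F] L →ₗ[F] L}

lemma br_mem_brSpan {A B : Submodule F L} {x y : L} (hx : x ∈ A) (hy : y ∈ B) :
    br x y ∈ brSpan br A B :=
  Submodule.subset_span ⟨x, hx, y, hy, rfl⟩

lemma brSpan_le {A B C : Submodule F L} :
    brSpan br A B ≤ C ↔ ∀ x ∈ A, ∀ y ∈ B, br x y ∈ C := by
  refine ⟨fun h x hx y hy => h (br_mem_brSpan hx hy), fun h => Submodule.span_le.2 ?_⟩
  rintro _ ⟨x, hx, y, hy, rfl⟩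
  exact h x hx y hy

lemma derSeriesOf_mono {A B : Submodule F L} (h : A ≤ B) (n : ℕ) :
    derSeriesOf br A n ≤ derSeriesOf br B n := by
  induction n with
  | zero => exact h
  | succ n ih => exact brSpan_le.2 fun x hx y hy => br_mem_brSpan (ih hx) (ih hy)

lemma derSeriesOf_add (A : Submodule F L) (m n : ℕ) :
    derSeriesOf br A (m + n) = derSeriesOf br (derSeriesOf br A m) n := by
  induction n with
  | zero => rfl
  | succ n ih =>
    change brSpan br (derSeriesOf br A (m + n)) (derSeriesOf br A (m + n)) = brSpan br _ _
    rw [ih]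

lemma lcsOf_le {U : Submodule F L} (hU : IsSubalg br U) (n : ℕ) : lcsOf br U n ≤ U := by
  induction n with
  | zero => exact le_rfl
  | succ n ih => exact brSpan_le.2 fun x hx y hy => hU x (ih hx) y hy

lemma solvable_of_le_nilpotent {U J : Submodule F L} (hU : IsSubalg br U)
    (hn : IsNilpotentSub br U) (hJ : J ≤ U) : IsSolvableSub br J := by
  obtain ⟨n, hn⟩ := hn
  have key : ∀ m, derSeriesOf br J m ≤ lcsOf br U m := by
    intro m
    induction m with
    | zero => exact hJ
    | succ m ih =>
      exact brSpan_le.2 fun x hx y hy => br_mem_brSpan (ih hx) (lcsOf_le hU m (ih hy))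
  exact ⟨n, le_bot_iff.1 ((key n).trans hn.le)⟩

lemma solvable_sup {A B : Submodule F L} (hB : IsLeibIdeal br B)
    (hA' : IsSolvableSub br A) (hB' : IsSolvableSub br B) : IsSolvableSub br (A ⊔ B) := by
  obtain ⟨m, hm⟩ := hA'
  obtain ⟨k, hk⟩ := hB'
  have key : ∀ j, derSeriesOf br (A ⊔ B) j ≤ derSeriesOf br A j ⊔ B := by
    intro j
    induction j with
    | zero => exact le_rfl
    | succ j ih =>
      refine brSpan_le.2 fun x hx y hy => ?_
      obtain ⟨a, ha, b, hb, rfl⟩ := Submodule.mem_sup.1 (ih hx)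
      obtain ⟨a', ha', b', hb', rfl⟩ := Submodule.mem_sup.1 (ih hy)
      have e : br (a + b) (a' + b') = br a a' + (br a b' + br b (a' + b')) := by
        simp only [map_add, LinearMap.add_apply]; abel
      rw [e]
      exact Submodule.add_mem_sup (br_mem_brSpan ha ha')
        (add_mem (hB.2 b' hb' a trivial).2 (hB.2 b hb _ trivial).1)
  have h1 : derSeriesOf br (A ⊔ B) m ≤ B := by simpa [hm] using key m
  exact ⟨m + k, by rw [derSeriesOf_add, ← le_bot_iff, ← hk]; exact derSeriesOf_mono h1 k⟩

lemma isLeibIdeal_sup {A B : Submodule F L} (hA : IsLeibIdeal br A) (hB : IsLeibIdeal br B) :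
    IsLeibIdeal br (A ⊔ B) := by
  rw [← sSup_pair]
  exact isLeibIdeal_sSup br _ (by rintro _ (rfl | rfl) <;> assumption)

lemma derSeriesOf_of_perfect {D : Submodule F L} (hD : brSpan br D D = D) (n : ℕ) :
    derSeriesOf br D n = D := by
  induction n with
  | zero => rfl
  | succ n ih => change brSpan br _ _ = D; rw [ih, hD]

lemma exists_perfect_derSeriesOf [FiniteDimensional F L] :
    ∃ n, brSpan br (derSeriesOf br ⊤ n) (derSeriesOf br ⊤ n) = derSeriesOf br ⊤ n := by
  have anti : Antitone (derSeriesOf br (⊤ : Submodule F L)) := by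
    refine antitone_nat_of_succ_le fun n => ?_
    induction n with
    | zero => exact le_top
    | succ n ih => exact brSpan_le.2 fun x hx y hy => br_mem_brSpan (ih hx) (ih hy)
  obtain ⟨n, hn⟩ := WellFoundedGT.monotone_chain_condition
    (α := (Submodule F L)ᵒᵈ) ⟨fun n => OrderDual.toDual (derSeriesOf br ⊤ n), fun _ _ h => anti h⟩
  exact ⟨n, (OrderDual.toDual.injective (hn (n + 1) n.le_succ)).symm⟩

/-! ### Perfect subalgebras and subideals -/

/-- One step down the subideal chain, from `K` to its ideal `A`. -/
lemma perfect_le_ideal {D U A K : Submodule F L} (hD : brSpan br D D = D)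
    (hU : IsSubalg br U) (hn : IsNilpotentSub br U) (hAK : IsIdealOf br A K)
    (hUA : U ⊔ A = ⊤) (hDK : D ≤ K) : D ≤ A := by
  obtain ⟨n, hn⟩ := hn
  have key : ∀ m, D ≤ A ⊔ lcsOf br U m := by
    intro m
    induction m with
    | zero => rw [sup_comm]; exact le_top.trans hUA.ge
    | succ m ih =>
      rw [← hD]
      refine brSpan_le.2 fun x hx y hy => ?_
      have hyK := hDK hy
      have hxK := hDK hx
      obtain ⟨c, hc, u, hu, rfl⟩ := Submodule.mem_sup.1 (ih hx)
      obtain ⟨c', hc', u', hu', rfl⟩ := Submodule.mem_sup.1 (ih hy)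
      have huK : u ∈ K := (Submodule.add_mem_iff_right K (hAK.1 hc)).1 hxK
      have e : br (c + u) (c' + u') = (br c (c' + u') + br u c') + br u u' := by
        simp only [map_add, LinearMap.add_apply]; abel
      rw [e]
      exact Submodule.add_mem_sup (add_mem (hAK.2 c hc _ hyK).1 (hAK.2 c' hc' u huK).2)
        (br_mem_brSpan hu (lcsOf_le hU m hu'))
  simpa [hn] using key n

/-- A subideal that together with a nilpotent subalgebra spans `L` contains every perfect
subalgebra. -/
lemma le_of_weak_complement {D U C : Submodule F L} (hD : brSpan br D D = D)
    (hU : IsSubalg br U) (hn : IsNilpotentSub br U) (hC : IsSubidealOf br C ⊤)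
    (hUC : U ⊔ C = ⊤) : D ≤ C := by
  obtain ⟨n, ch, h0, hN, hch⟩ := hC
  have hup : ∀ i ≤ n, C ≤ ch i := by
    intro i
    induction i with
    | zero => intro _; exact h0.ge
    | succ i ih => intro hi; exact (ih (by omega)).trans (hch i hi).1
  have hdown : ∀ j ≤ n, D ≤ ch (n - j) := by
    intro j
    induction j with
    | zero => intro _; rw [Nat.sub_zero, hN]; exact le_top
    | succ j ih =>
      intro hj
      have hi := hch (n - (j + 1)) (by omega)
      rw [show n - (j + 1) + 1 = n - j by omega] at hi
      refine perfect_le_ideal hD hU hn hi ?_ (ih (by omega))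
      exact top_le_iff.1 (hUC.ge.trans (sup_le_sup_left (hup _ (by omega)) U))
  simpa [h0] using hdown n le_rfl

/-! ### The right annihilator and the Fitting argument -/

/-- The right annihilator `{z | [L, z] = 0}`. It contains all squares, so it plays the role of the
Leibniz kernel. -/
def rightAnn (br : L →ₗ[F] L →ₗ[F] L) : Submodule F L := LinearMap.ker br.flip

lemma mem_rightAnn {z : L} : z ∈ rightAnn br ↔ ∀ y, br y z = 0 := by
  simp [rightAnn, LinearMap.ext_iff]

lemma rightAnn_isIdeal (hbr : IsLeibnizBracket br) : IsLeibIdeal br (rightAnn br) := by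
  refine ⟨le_top, fun z hz y _ => ⟨mem_rightAnn.2 fun w => ?_, ?_⟩⟩
  · rw [hbr, mem_rightAnn.1 hz, mem_rightAnn.1 hz]; simp
  · rw [mem_rightAnn.1 hz]; exact zero_mem _

lemma rightAnn_solvable : IsSolvableSub br (rightAnn br) :=
  ⟨1, le_bot_iff.1 (brSpan_le.2 fun x _ y hy => by simp [mem_rightAnn.1 hy])⟩

lemma sq_mem_rightAnn (hbr : IsLeibnizBracket br) (x : L) : br x x ∈ rightAnn br :=
  mem_rightAnn.2 fun y => by rw [hbr, sub_self]

/-- Fitting argument: modulo the right annihilator, every element of a subalgebra `D` agrees with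
an element of `D` lying in a nilpotent subalgebra. -/
lemma exists_nilpotent_correction [FiniteDimensional F L] (hbr : IsLeibnizBracket br)
    {D : Submodule F L} (hD : IsSubalg br D) {x : L} (hx : x ∈ D) :
    ∃ z ∈ rightAnn br ⊓ D, ∃ U, IsSubalg br U ∧ IsNilpotentSub br U ∧ x - z ∈ U := by
  set f : L →ₗ[F] L := br.flip x with hf
  have fa : ∀ a, f a = br a x := fun a => rfl
  set W := rightAnn br ⊓ D with hW
  have hWf : ∀ w ∈ W, f w ∈ W := fun w hw =>
    ⟨((rightAnn_isIdeal hbr).2 w hw.1 x trivial).1, hD w hw.2 x hx⟩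
  -- The images `f ^ k (W)` stabilise; as `f x = [x, x] ∈ W`, some `z ∈ W` has
  -- `f ^ (k + 1) z = f ^ (k + 1) x`.
  have hanti : Antitone fun k : ℕ => W.map (f ^ k) := by
    refine antitone_nat_of_succ_le fun k => ?_
    rintro _ ⟨w, hw, rfl⟩
    exact ⟨f w, hWf w hw, by rw [pow_succ]; rfl⟩
  obtain ⟨k, hk⟩ := WellFoundedGT.monotone_chain_condition
    (α := (Submodule F L)ᵒᵈ) ⟨fun k => OrderDual.toDual (W.map (f ^ k)), fun _ _ h => hanti h⟩
  have hk' : W.map (f ^ k) = W.map (f ^ (k + 1)) :=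
    OrderDual.toDual.injective (hk (k + 1) k.le_succ)
  have hfx : f x ∈ W := ⟨sq_mem_rightAnn hbr x, hD x hx x hx⟩
  obtain ⟨z, hz, hzx⟩ : (f ^ k) (f x) ∈ W.map (f ^ (k + 1)) :=
    hk' ▸ Submodule.mem_map_of_mem hfx
  have hzx' : (f ^ (k + 1)) (x - z) = 0 := by
    rw [map_sub, hzx, pow_succ]; exact sub_self _
  -- For `v` in the right annihilator, `[a, c • x + v] = c • f a`, so `f` controls nilpotency.
  have hbrf : ∀ b ∈ Submodule.span F {x} ⊔ rightAnn br, ∃ c : F, ∀ a, br a b = c • f a := by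
    intro b hb
    obtain ⟨_, hu, v, hv, rfl⟩ := Submodule.mem_sup.1 hb
    obtain ⟨c, rfl⟩ := Submodule.mem_span_singleton.1 hu
    exact ⟨c, fun a => by simp [fa, mem_rightAnn.1 hv]⟩
  have hker : ∀ j (a : L), (f ^ j) a = 0 → (f ^ (j - 1)) (f a) = 0 := by
    rintro (_ | j) a ha
    · have : a = 0 := ha
      simp [this]
    · rw [pow_succ] at ha; exact ha
  refine ⟨z, hz, (Submodule.span F {x} ⊔ rightAnn br) ⊓ LinearMap.ker (f ^ (k + 1)), ?_, ?_, ?_⟩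
  · rintro a ⟨ha, ha'⟩ b ⟨hb, -⟩
    obtain ⟨c, hc⟩ := hbrf b hb
    rw [hc]
    refine Submodule.smul_mem _ c ⟨Submodule.mem_sup_right ?_, ?_⟩
    · obtain ⟨d, hd, v, hv, rfl⟩ := Submodule.mem_sup.1 ha
      obtain ⟨d, rfl⟩ := Submodule.mem_span_singleton.1 hd
      rw [map_add, map_smul]
      exact add_mem (Submodule.smul_mem _ d (sq_mem_rightAnn hbr x))
        ((rightAnn_isIdeal hbr).2 v hv x trivial).1
    · have h0 : (f ^ (k + 1)) a = 0 := ha'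
      have h1 : (f ^ (k + 1)) (f a) = f ((f ^ (k + 1)) a) := by
        rw [← Module.End.mul_apply, ← Module.End.mul_apply, ← pow_succ, ← pow_succ']
      change (f ^ (k + 1)) (f a) = 0
      rw [h1, h0, map_zero]
  · refine ⟨k + 1, ?_⟩
    have key : ∀ m, lcsOf br ((Submodule.span F {x} ⊔ rightAnn br) ⊓ LinearMap.ker (f ^ (k + 1))) m
        ≤ LinearMap.ker (f ^ (k + 1 - m)) := by
      intro m
      induction m with
      | zero => exact inf_le_right
      | succ m ih =>
        refine brSpan_le.2 fun a ha b hb => ?_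
        obtain ⟨c, hc⟩ := hbrf b hb.1
        rw [hc]
        exact Submodule.smul_mem _ c (hker (k + 1 - m) a (ih ha))
    refine le_bot_iff.1 ((key (k + 1)).trans ?_)
    intro a ha
    rw [Nat.sub_self] at ha
    exact ha
  · exact ⟨sub_mem (Submodule.mem_sup_left (Submodule.mem_span_singleton_self x))
      (Submodule.mem_sup_right hz.1), hzx'⟩

/-! ### Maximality arguments and the theorem -/

lemma exists_maximalNilpotent_ge [FiniteDimensional F L] {U : Submodule F L}
    (hU : IsSubalg br U) (hn : IsNilpotentSub br U) : ∃ V, IsMaximalNilpotentSub br V ∧ U ≤ V := by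
  obtain ⟨V, ⟨hV1, hV2, hUV⟩, hmax⟩ := WellFounded.has_min
    (wellFounded_gt : WellFounded ((· > ·) : Submodule F L → Submodule F L → Prop))
    {V | IsSubalg br V ∧ IsNilpotentSub br V ∧ U ≤ V} ⟨U, hU, hn, le_rfl⟩
  exact ⟨V, ⟨hV1, hV2, fun W hW hW' hVW =>
    (eq_of_le_of_not_lt hVW (hmax W ⟨hW, hW', hUV.trans hVW⟩)).symm⟩, hUV⟩

/-- The solvable radical exists. -/
lemma exists_greatest_solvable_ideal [FiniteDimensional F L] (br : L →ₗ[F] L →ₗ[F] L) :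
    ∃ R, IsSolvableSub br R ∧ ∀ J, IsLeibIdeal br J → IsSolvableSub br J → J ≤ R := by
  obtain ⟨R, ⟨hR, hR'⟩, hmax⟩ := WellFounded.has_min
    (wellFounded_gt : WellFounded ((· > ·) : Submodule F L → Submodule F L → Prop))
    {R | IsLeibIdeal br R ∧ IsSolvableSub br R}
    ⟨⊥, ⟨le_top, fun x hx y _ => by simp [(Submodule.mem_bot F).1 hx]⟩, 0, rfl⟩
  refine ⟨R, hR', fun J hJ hJ' => ?_⟩
  have := eq_of_le_of_not_lt le_sup_left
    (hmax (R ⊔ J) ⟨isLeibIdeal_sup hR hJ, solvable_sup hJ hR' hJ'⟩)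
  exact le_sup_right.trans this.ge

end Aux

/-- over a field of characteristic zero, if every maximal
nilpotent subalgebra of `L` is a weak c-ideal, then `L` is solvable. -/
theorem solvable_of_maximalNilpotent_weakCIdeal [CharZero F]
    (br : L →ₗ[F] L →ₗ[F] L) (hbr : IsLeibnizBracket br)
    [FiniteDimensional F L]
    (h : ∀ U : Submodule F L, IsMaximalNilpotentSub br U → IsWeakCIdeal br U) :
    IsSolvableSub br ⊤ := by
  obtain ⟨n, hn⟩ := exists_perfect_derSeriesOf (br := br)
  obtain ⟨R, ⟨m, hm⟩, hR⟩ := exists_greatest_solvable_ideal br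
  refine ⟨n, ?_⟩
  generalize derSeriesOf br ⊤ n = D at hn
  have hDR : D ≤ R := by
    intro x hx
    obtain ⟨z, hz, U₀, hU₀, hU₀n, hxz⟩ := exists_nilpotent_correction hbr
      (fun a ha b hb => hn.le (br_mem_brSpan ha hb)) hx
    obtain ⟨U, hU, hU₀U⟩ := exists_maximalNilpotent_ge hU₀ hU₀n
    obtain ⟨-, -, C, hC, hUC, hcore⟩ := h U hU
    have hDC : D ≤ C := le_of_weak_complement hn hU.1 hU.2.1 hC hUC
    have hmem : x - z ∈ leibCore br U := hcore ⟨hU₀U hxz, hDC (sub_mem hx hz.2)⟩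
    have h1 : x - z ∈ R := hR _ (leibCore_isIdeal br U)
      (solvable_of_le_nilpotent hU.1 hU.2.1 (sSup_le fun A hA => hA.2)) hmem
    have h2 : z ∈ R := hR _ (rightAnn_isIdeal hbr) rightAnn_solvable hz.1
    simpa using add_mem h1 h2
  rw [← le_bot_iff, ← hm, ← derSeriesOf_of_perfect hn m]
  exact derSeriesOf_mono hDR m
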